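/- For every real number $r > 0$ and every natural number $n$, $\int_{(n+1+r)/r}^{(n+2+r)/r} (u-1)^{n+1}\, u^{-n-r-2}\, du < \int_{(n+1+r)/r}^{+\infty} (u-1)^n\, u^{-n-r-2}\left(\frac{ru}{n+1+r} - 1\right) du$. -/

import Mathlib

open Real MeasureTheory intervalIntegral

lemma aux_deriv (r : ℝ) (hr : 0 < r) (n : ℕ) (u : ℝ) (hu : 0 < u) :
    HasDerivAt (fun u : ℝ => -((u - 1) ^ (n + 1) * u ^ (-(n : ℝ) - r - 1) / (n + 1 + r)))
      ((u - 1) ^ n * u ^ (-(n : ℝ) - r - 2) * (r * u / (n + 1 + r) - 1)) u := by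
  have h1 : HasDerivAt (fun u : ℝ => (u - 1) ^ (n + 1)) (((n + 1 : ℕ) : ℝ) * (u - 1) ^ n * 1) u := by
    exact ((hasDerivAt_id u).sub_const 1).pow (n + 1)
  have h2 := Real.hasDerivAt_rpow_const (x := u) (p := -(n : ℝ) - r - 1) (Or.inl hu.ne')
  have h3 := ((h1.mul h2).div_const ((n : ℝ) + 1 + r)).neg
  refine h3.congr_deriv ?_
  have hs : (n : ℝ) + 1 + r ≠ 0 := by positivity
  have e1 : -(n : ℝ) - r - 1 - 1 = -(n : ℝ) - r - 2 := by ring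
  have e2 : u ^ (-(n : ℝ) - r - 1) = u ^ (-(n : ℝ) - r - 2) * u := by
    rw [← Real.rpow_add_one hu.ne']; congr 1; ring
  rw [e1, e2]
  push_cast
  field_simp
  ring

theorem integral_lt_improper (r : ℝ) (hr : 0 < r) (n : ℕ) :
    (∫ u in ((n + 1 + r) / r)..((n + 2 + r) / r), (u - 1) ^ (n + 1) * u ^ (-(n : ℝ) - r - 2))
      < ∫ u in Set.Ici ((n + 1 + r) / r),
          (u - 1) ^ n * u ^ (-(n : ℝ) - r - 2) * (r * u / (n + 1 + r) - 1) := by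
  have hs : 0 < (n : ℝ) + 1 + r := by positivity
  obtain ⟨a, ha⟩ : ∃ a : ℝ, a = (n + 1 + r) / r := ⟨_, rfl⟩
  have hb : ((n : ℝ) + 2 + r) / r = a + 1 / r := by rw [ha]; field_simp; ring
  have har : a * r = n + 1 + r := by rw [ha]; field_simp
  have ha1 : 1 < a := by
    rw [ha, lt_div_iff₀ hr]; have : (0 : ℝ) ≤ n := by positivity
    linarith
  have ha0 : 0 < a := by linarith
  rw [hb, ← ha]
  have hnn : ∀ u, a ≤ u →
      0 ≤ (u - 1) ^ n * u ^ (-(n : ℝ) - r - 2) * (r * u / (n + 1 + r) - 1) := by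
    intro u hu
    have : 0 ≤ u - 1 := by linarith
    have : 0 ≤ u := by linarith
    have : 0 ≤ r * u / (n + 1 + r) - 1 := by
      rw [sub_nonneg, le_div_iff₀ hs]; nlinarith
    positivity
  have hd := fun u (hu : a ≤ u) => aux_deriv r hr n u (by linarith)
  have hlim : Filter.Tendsto
      (fun u : ℝ => -((u - 1) ^ (n + 1) * u ^ (-(n : ℝ) - r - 1) / (n + 1 + r)))
      Filter.atTop (nhds 0) := by
    have : Filter.Tendsto (fun u : ℝ => (u - 1) ^ (n + 1) * u ^ (-(n : ℝ) - r - 1))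
        Filter.atTop (nhds 0) := by
      refine squeeze_zero' ?_ ?_ (tendsto_rpow_neg_atTop hr)
      · filter_upwards [Filter.eventually_ge_atTop 1] with u hu
        have : 0 ≤ u - 1 := by linarith
        have : 0 ≤ u := by linarith
        positivity
      · filter_upwards [Filter.eventually_ge_atTop 1] with u hu
        have h1 : 0 ≤ u - 1 := by linarith
        have h2 : 0 < u := by linarith
        have h3 : u ^ (-r) = u ^ (n + 1) * u ^ (-(n : ℝ) - r - 1) := by
          rw [← Real.rpow_natCast, ← Real.rpow_add h2]; congr 1; push_cast; ring
        rw [h3]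
        gcongr
        linarith
    simpa using (this.div_const ((n : ℝ) + 1 + r)).neg
  rw [integral_Ici_eq_integral_Ioi, integral_Ioi_of_hasDerivAt_of_nonneg'
    (fun u hu => hd u hu) (fun u hu => hnn u (le_of_lt hu)) hlim]
  have hmono : MonotoneOn
      (fun u : ℝ => -((u - 1) ^ (n + 1) * u ^ (-(n : ℝ) - r - 1) / (n + 1 + r))) (Set.Ici a) := by
    refine monotoneOn_of_deriv_nonneg (convex_Ici a)
      (fun u hu => (hd u hu).continuousAt.continuousWithinAt) ?_ ?_
    · intro u hu
      rw [interior_Ici] at hu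
      exact (hd u (le_of_lt hu)).differentiableAt.differentiableWithinAt
    · intro u hu
      rw [interior_Ici] at hu
      rw [(hd u (le_of_lt hu)).deriv]
      exact hnn u (le_of_lt hu)
  have hfg : ∀ u : ℝ, 0 < u → u ^ (-(n : ℝ) - r - 2) = u ^ (-(n : ℝ) - r - 1) / u := by
    intro u hu
    rw [← Real.rpow_sub_one hu.ne']; congr 1; ring
  have hlt : ∀ u, a < u → (u - 1) ^ (n + 1) * u ^ (-(n : ℝ) - r - 2)
      < (a - 1) ^ (n + 1) * a ^ (-(n : ℝ) - r - 2) := by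
    intro u hu
    have hu0 : 0 < u := by linarith
    have h := hmono (Set.mem_Ici.2 le_rfl) (Set.mem_Ici.2 hu.le) hu.le
    simp only [neg_le_neg_iff] at h
    rw [div_le_div_iff_of_pos_right hs] at h
    rw [hfg u hu0, hfg a ha0, ← mul_div_assoc, ← mul_div_assoc]
    have h1 : 0 < a - 1 := by linarith
    have : 0 < (a - 1) ^ (n + 1) * a ^ (-(n : ℝ) - r - 1) := by positivity
    exact (div_le_div_of_nonneg_right h hu0.le).trans_lt (div_lt_div_of_pos_left this ha0 hu)
  have hr1 : 0 < 1 / r := by positivity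
  have key : (∫ u in a..(a + 1 / r), (u - 1) ^ (n + 1) * u ^ (-(n : ℝ) - r - 2))
      < ∫ u in a..(a + 1 / r), (a - 1) ^ (n + 1) * a ^ (-(n : ℝ) - r - 2) := by
    refine integral_lt_integral_of_continuousOn_of_le_of_exists_lt (by linarith) ?_
      continuousOn_const (fun u hu => (hlt u hu.1).le)
      ⟨a + 1 / r, ⟨by linarith, le_rfl⟩, hlt _ (by linarith)⟩
    refine ContinuousOn.mul (by fun_prop) ?_
    refine ContinuousOn.rpow_const continuousOn_id (fun u hu => Or.inl ?_)
    have := hu.1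
    show u ≠ 0
    linarith
  refine key.trans_eq ?_
  rw [intervalIntegral.integral_const, hfg a ha0, ← har, smul_eq_mul]
  field_simp
  ring
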